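/- (Concentration corollary of the coin-flipping game, as used in the mistake-bound analysis of POP.) In the setting of the adaptive coin-flipping game with initial budget k and m rounds (adapted biases p_i ∈ [0, 5/6], q_i ∈ [p_i/5, 1 − p_i], outcomes X_i with conditional probabilities p_i of reward and q_i of budget loss, rewards accruing only while the budget is positive), for every 0 < β < 1 it holds that ℙ[reward_m > 18k + 18 + 6·ln(1/β)] ≤ β. -/

import Mathlib

open MeasureTheory

/-- The exponential potential of the coin game: `exp (reward / 6 + 3 * budget⁺)`. -/
noncomputable def coinPotential (r b : ℤ) : ℝ := Real.exp ((r : ℝ) / 6 + 3 * ((max b 0 : ℤ) : ℝ))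

theorem coinPotential_pos (r b : ℤ) : 0 < coinPotential r b := Real.exp_pos _

theorem coinPotential_add_one_left (r b : ℤ) :
    coinPotential (r + 1) b = coinPotential r b * Real.exp (1 / 6) := by
  rw [coinPotential, coinPotential, ← Real.exp_add]
  push_cast
  ring_nf

theorem coinPotential_sub_one_right (r : ℤ) {b : ℤ} (hb : 0 < b) :
    coinPotential r (b - 1) = coinPotential r b * Real.exp (-3) := by
  rw [coinPotential, coinPotential, ← Real.exp_add, max_eq_left (by lia), max_eq_left hb.le]
  push_cast
  ring_nf

theorem coinPotential_of_nonpos (r : ℤ) {b : ℤ} (hb : b ≤ 0) :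
    coinPotential r b = coinPotential r 0 := by
  simp [coinPotential, hb]

theorem five_mul_exp_sixth_sub_one_le : 5 * (Real.exp (1 / 6) - 1) ≤ 1 - Real.exp (-3) := by
  have h1 : Real.exp (1 / 6) ≤ 19 / 16 := by
    refine le_of_pow_le_pow_left₀ (n := 6) (by norm_num) (by norm_num) ?_
    rw [← Real.exp_nat_mul]
    norm_num
    linarith [Real.exp_one_lt_d9]
  have h2 : Real.exp (-3) ≤ 1 / 16 := by
    rw [Real.exp_neg, one_div]
    refine inv_anti₀ (by norm_num) ?_
    have h : Real.exp 3 = Real.exp 1 ^ 3 := by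
      rw [← Real.exp_nat_mul]
      norm_num
    rw [h]
    calc (16 : ℝ) ≤ 2.7 ^ 3 := by norm_num
      _ ≤ Real.exp 1 ^ 3 := by
        gcongr
        linarith [Real.exp_one_gt_d9]
  linarith

/-- A bounded factor known at the conditioning time lets one replace the indicator of an event by
its conditional probability under the integral. -/
theorem integral_mul_indicator_eq_of_condExp {Ω : Type*} {m' m0 : MeasurableSpace Ω}
    {μ : Measure Ω} [IsProbabilityMeasure μ] (hm : m' ≤ m0) {G p : Ω → ℝ} {C : ℝ} {s : Set Ω}
    (hG : Measurable[m'] G) (hC : ∀ ω, |G ω| ≤ C) (hs : MeasurableSet s)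
    (hp : μ[s.indicator (fun _ => (1 : ℝ)) | m'] =ᵐ[μ] p) :
    Integrable (fun ω => G ω * s.indicator (fun _ => (1 : ℝ)) ω) μ ∧
      Integrable (fun ω => G ω * p ω) μ ∧
      ∫ ω, G ω * s.indicator (fun _ => (1 : ℝ)) ω ∂μ = ∫ ω, G ω * p ω ∂μ := by
  have hind : Integrable (s.indicator (fun _ => (1 : ℝ))) μ :=
    (integrable_const (1 : ℝ)).indicator hs
  have hint : Integrable (G * s.indicator (fun _ => (1 : ℝ))) μ :=
    hind.bdd_mul (hG.mono hm le_rfl).aestronglyMeasurable (Filter.Eventually.of_forall hC)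
  have key : μ[G * s.indicator (fun _ => (1 : ℝ)) | m'] =ᵐ[μ] fun ω => G ω * p ω := by
    filter_upwards [condExp_mul_of_stronglyMeasurable_left hG.stronglyMeasurable hint hind, hp]
      with ω h1 h2
    rw [h1, Pi.mul_apply, h2]
  refine ⟨hint, (integrable_congr key).1 integrable_condExp, ?_⟩
  rw [← integral_congr_ae key, integral_condExp hm]
  rfl

/-- One round of the coin game does not increase a potential `Φ` that is multiplied, while the game
is running (`A`), by `exp (1 / 6)` on a reward (`s`) and by `exp (-3)` on a budget loss (`t`). -/
theorem integral_coin_round_le {Ω : Type*} {m' m0 : MeasurableSpace Ω}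
    {μ : Measure Ω} [IsProbabilityMeasure μ] (hm : m' ≤ m0) {Φ Ψ p q : Ω → ℝ} {C : ℝ}
    {A s t : Set Ω} (hΦ : Measurable[m'] Φ) (hΦ0 : ∀ ω, 0 ≤ Φ ω) (hC : ∀ ω, Φ ω ≤ C)
    (hA : MeasurableSet[m'] A) (hs : MeasurableSet s) (ht : MeasurableSet t)
    (hp : μ[s.indicator (fun _ => (1 : ℝ)) | m'] =ᵐ[μ] p)
    (hq : μ[t.indicator (fun _ => (1 : ℝ)) | m'] =ᵐ[μ] q)
    (hp0 : ∀ᵐ ω ∂μ, 0 ≤ p ω) (hpq : ∀ᵐ ω ∂μ, p ω / 5 ≤ q ω)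
    (hΨ : ∀ ω, Ψ ω = Φ ω +
      ((Real.exp (1 / 6) - 1) * (A.indicator Φ ω * s.indicator (fun _ => (1 : ℝ)) ω) -
        (1 - Real.exp (-3)) * (A.indicator Φ ω * t.indicator (fun _ => (1 : ℝ)) ω))) :
    ∫ ω, Ψ ω ∂μ ≤ ∫ ω, Φ ω ∂μ := by
  have hG : Measurable[m'] (A.indicator Φ) := hΦ.indicator hA
  have hG0 : ∀ ω, 0 ≤ A.indicator Φ ω := fun ω => Set.indicator_nonneg (fun ω _ => hΦ0 ω) ω
  have hGC : ∀ ω, |A.indicator Φ ω| ≤ C := fun ω => by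
    rw [abs_of_nonneg (hG0 ω)]
    exact (Set.indicator_le_self' (fun ω _ => hΦ0 ω) ω).trans (hC ω)
  have hΦint : Integrable Φ μ :=
    Integrable.of_bound (hΦ.mono hm le_rfl).aestronglyMeasurable C
      (Filter.Eventually.of_forall fun ω => by
        rw [Real.norm_eq_abs, abs_of_nonneg (hΦ0 ω)]
        exact hC ω)
  obtain ⟨hs1, hs2, hs3⟩ := integral_mul_indicator_eq_of_condExp hm hG hGC hs hp
  obtain ⟨ht1, ht2, ht3⟩ := integral_mul_indicator_eq_of_condExp hm hG hGC ht hq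
  have hle : (Real.exp (1 / 6) - 1) * ∫ ω, A.indicator Φ ω * p ω ∂μ ≤
      (1 - Real.exp (-3)) * ∫ ω, A.indicator Φ ω * q ω ∂μ := by
    rw [← integral_const_mul, ← integral_const_mul]
    refine integral_mono_ae (hs2.const_mul _) (ht2.const_mul _) ?_
    filter_upwards [hp0, hpq] with ω h0 h1
    have h2 : (Real.exp (1 / 6) - 1) * p ω ≤ (1 - Real.exp (-3)) * q ω := by
      have h3 : 0 ≤ 1 - Real.exp (-3) := by
        linarith [Real.exp_le_one_iff.2 (by norm_num : (-3 : ℝ) ≤ 0)]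
      nlinarith [five_mul_exp_sixth_sub_one_le, mul_le_mul_of_nonneg_left h1 h3,
        mul_le_mul_of_nonneg_right five_mul_exp_sixth_sub_one_le h0]
    calc (Real.exp (1 / 6) - 1) * (A.indicator Φ ω * p ω)
        = A.indicator Φ ω * ((Real.exp (1 / 6) - 1) * p ω) := by ring
      _ ≤ A.indicator Φ ω * ((1 - Real.exp (-3)) * q ω) := mul_le_mul_of_nonneg_left h2 (hG0 ω)
      _ = (1 - Real.exp (-3)) * (A.indicator Φ ω * q ω) := by ring
  simp_rw [hΨ]
  rw [integral_add hΦint (by fun_prop), integral_sub (hs1.const_mul _) (ht1.const_mul _), integral_const_mul, integral_const_mul,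
    hs3, ht3]
  linarith

/-- Concentration corollary of the adaptive coin-flipping game (as used in the
mistake-bound analysis of POP): with initial budget `k`, for every `0 < β < 1` the
probability that the adversary collects more than `18k + 18 + 6·ln(1/β)` rewards
is at most `β`. -/
theorem coin_game_concentration {Ω : Type*} {m0 : MeasurableSpace Ω}
    (μ : Measure Ω) [IsProbabilityMeasure μ]
    (𝓕 : Filtration ℕ m0) (m : ℕ) (k : ℕ)
    (p q : ℕ → Ω → ℝ) (X : ℕ → Ω → ℕ)
    (hX_range : ∀ i ω, X i ω ≤ 2)
    (hX_meas : ∀ i, 1 ≤ i → i ≤ m → Measurable[𝓕 i] (X i))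
    (hp_meas : ∀ i, 1 ≤ i → i ≤ m → Measurable[𝓕 (i - 1)] (p i))
    (hq_meas : ∀ i, 1 ≤ i → i ≤ m → Measurable[𝓕 (i - 1)] (q i))
    (hp_bound : ∀ i, 1 ≤ i → i ≤ m → ∀ᵐ ω ∂μ, 0 ≤ p i ω ∧ p i ω ≤ 5 / 6)
    (hq_bound : ∀ i, 1 ≤ i → i ≤ m → ∀ᵐ ω ∂μ, p i ω / 5 ≤ q i ω ∧ q i ω ≤ 1 - p i ω)
    (hcond1 : ∀ i, 1 ≤ i → i ≤ m →
      μ[Set.indicator {ω | X i ω = 1} (fun _ => (1 : ℝ)) | 𝓕 (i - 1)] =ᵐ[μ] p i)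
    (hcond2 : ∀ i, 1 ≤ i → i ≤ m →
      μ[Set.indicator {ω | X i ω = 2} (fun _ => (1 : ℝ)) | 𝓕 (i - 1)] =ᵐ[μ] q i)
    (reward budget : ℕ → Ω → ℤ)
    (hreward0 : ∀ ω, reward 0 ω = 0) (hbudget0 : ∀ ω, budget 0 ω = (k : ℤ))
    (hreward : ∀ i ω, reward (i + 1) ω =
      if X (i + 1) ω = 1 ∧ 0 < budget i ω then reward i ω + 1 else reward i ω)
    (hbudget : ∀ i ω, budget (i + 1) ω =
      if X (i + 1) ω = 2 then budget i ω - 1 else budget i ω)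
    (β : ℝ) (hβ0 : 0 < β) (hβ1 : β < 1) :
    μ {ω | 18 * (k : ℝ) + 18 + 6 * Real.log (1 / β) < (reward m ω : ℝ)} ≤
      ENNReal.ofReal β := by
  have hadapted : ∀ i ≤ m, Measurable[𝓕 i] (reward i) ∧ Measurable[𝓕 i] (budget i) := by
    intro i
    induction i with
    | zero =>
      intro _
      rw [funext hreward0, funext hbudget0]
      exact ⟨measurable_const, measurable_const⟩
    | succ i ih =>
      intro hi
      obtain ⟨hr, hb⟩ := ih (by lia)
      have hr' := hr.mono (𝓕.mono i.le_succ) le_rfl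
      have hb' := hb.mono (𝓕.mono i.le_succ) le_rfl
      have hX := hX_meas (i + 1) (by lia) hi
      have hX1 : MeasurableSet[𝓕 (i + 1)] {ω | X (i + 1) ω = 1} := hX (measurableSet_singleton 1)
      have hX2 : MeasurableSet[𝓕 (i + 1)] {ω | X (i + 1) ω = 2} := hX (measurableSet_singleton 2)
      have hpos : MeasurableSet[𝓕 (i + 1)] {ω | 0 < budget i ω} := hb' measurableSet_Ioi
      rw [funext (hreward i), funext (hbudget i)]
      exact ⟨Measurable.ite (hX1.inter hpos) (hr'.add_const 1) hr',
        Measurable.ite hX2 (hb'.sub_const 1) hb'⟩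
  have hbdd : ∀ i ω, reward i ω ≤ i ∧ budget i ω ≤ k := by
    intro i ω
    induction i with
    | zero => simp [hreward0, hbudget0]
    | succ i ih =>
      rw [hreward, hbudget]
      push_cast
      constructor <;> split_ifs <;> lia
  have hmeas : ∀ i ≤ m, Measurable[𝓕 i] fun ω => coinPotential (reward i ω) (budget i ω) := by
    intro i hi
    exact (measurable_of_countable fun x : ℤ × ℤ => coinPotential x.1 x.2).comp
      ((hadapted i hi).1.prodMk (hadapted i hi).2)
  have hupper : ∀ i ω, coinPotential (reward i ω) (budget i ω) ≤ coinPotential i k := by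
    intro i ω
    obtain ⟨h1, h2⟩ := hbdd i ω
    unfold coinPotential
    gcongr
  have hstep : ∀ i < m, ∫ ω, coinPotential (reward (i + 1) ω) (budget (i + 1) ω) ∂μ ≤
      ∫ ω, coinPotential (reward i ω) (budget i ω) ∂μ := by
    intro i hi
    have hX := (hX_meas (i + 1) (by lia) hi).mono (𝓕.le _) le_rfl
    refine integral_coin_round_le (𝓕.le i) (A := {ω | 0 < budget i ω}) (hmeas i hi.le)
      (fun ω => (coinPotential_pos _ _).le) (hupper i) ((hadapted i hi.le).2 measurableSet_Ioi)
      (hX (measurableSet_singleton 1)) (hX (measurableSet_singleton 2))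
      (hcond1 (i + 1) (by lia) hi) (hcond2 (i + 1) (by lia) hi)
      ((hp_bound (i + 1) (by lia) hi).mono fun ω h => h.1)
      ((hq_bound (i + 1) (by lia) hi).mono fun ω h => h.1) fun ω => ?_
    simp only [hreward, hbudget, Set.indicator_apply, Set.mem_ofPred_eq]
    by_cases hb : 0 < budget i ω
    · by_cases h1 : X (i + 1) ω = 1
      · simp [h1, hb, coinPotential_add_one_left]
        ring
      · by_cases h2 : X (i + 1) ω = 2
        · simp [h2, hb, coinPotential_sub_one_right]
          ring
        · simp [h1, h2]
    · have hb0 : budget i ω ≤ 0 := not_lt.1 hb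
      have hb1 : budget i ω - 1 ≤ 0 := by lia
      split_ifs <;> simp_all [coinPotential_of_nonpos]
  have hexp : ∀ i ≤ m, ∫ ω, coinPotential (reward i ω) (budget i ω) ∂μ ≤ coinPotential 0 k := by
    intro i
    induction i with
    | zero => simp [hreward0, hbudget0]
    | succ i ih => exact fun hi => (hstep i hi).trans (ih (by lia))
  set c : ℝ := 18 * (k : ℝ) + 18 + 6 * Real.log (1 / β) with hc
  have hint : Integrable (fun ω => coinPotential (reward m ω) (budget m ω)) μ :=
    Integrable.of_bound ((hmeas m le_rfl).mono (𝓕.le m) le_rfl).aestronglyMeasurable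
      (coinPotential m k) (Filter.Eventually.of_forall fun ω => by
        rw [Real.norm_eq_abs, abs_of_pos (coinPotential_pos _ _)]
        exact hupper m ω)
  have hmarkov := mul_meas_ge_le_integral_of_nonneg
    (Filter.Eventually.of_forall fun ω => (coinPotential_pos (reward m ω) (budget m ω)).le)
    hint (Real.exp (c / 6))
  have hsub : {ω | c < (reward m ω : ℝ)} ⊆
      {ω | Real.exp (c / 6) ≤ coinPotential (reward m ω) (budget m ω)} := by
    intro ω hω
    have h1 : c < (reward m ω : ℝ) := hω
    have h2 : (0 : ℝ) ≤ ((max (budget m ω) 0 : ℤ) : ℝ) := by exact_mod_cast le_max_right _ _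
    refine Real.exp_le_exp.2 ?_
    linarith
  have hβc : coinPotential 0 k ≤ Real.exp (c / 6) * β := by
    conv_rhs => rw [← Real.exp_log hβ0, ← Real.exp_add]
    have hk : max (k : ℤ) 0 = k := max_eq_left (by positivity)
    rw [coinPotential, hk, hc, one_div, Real.log_inv]
    refine Real.exp_le_exp.2 ?_
    push_cast
    linarith
  have hreal : μ.real {ω | Real.exp (c / 6) ≤ coinPotential (reward m ω) (budget m ω)} ≤ β :=
    le_of_mul_le_mul_left ((hmarkov.trans (hexp m le_rfl)).trans hβc) (Real.exp_pos _)
  refine (measure_mono hsub).trans ?_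
  rw [← ofReal_measureReal]
  exact ENNReal.ofReal_le_ofReal hreal
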